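/- For every integer n ≥ 1, the number of rooted forests on n labeled vertices (with any number of components) equals (n+1)^{n-1}. -/

import Mathlib

/-!
A rooted forest is encoded by its parent map, sending each vertex to its parent or, if it is a
root, to a label. Deleting the roots of a forest on `n` vertices leaves a forest whose own roots are
labelled by the deleted vertices they hung from. So if `A n x` is the weighted number of forests
with a factor `x` per root, then `A n x = ∑ k, n.choose k * x ^ k * A (n - k) k`. The polynomials
`x * (x + n) ^ (n - 1)` satisfy the same recurrence, by the binomial theorem applied to
`(x + n) ^ (n - 1)`.
-/

universe u

open Finset Relation

section AbelPolynomial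

variable {R : Type*} [CommSemiring R]

/-- The value at `x` of the polynomial `x * (x + n) ^ (n - 1)`, the Abel polynomial with parameter
`-1`. At `n = 0`, where this formula would give `x`, the value is `1`, as it must be for the count
of forests on no vertices. -/
def abelPoly : ℕ → R → R
  | 0, _ => 1
  | n + 1, x => x * (x + (n + 1 : ℕ)) ^ n

theorem abelPoly_of_ne_zero {n : ℕ} (hn : n ≠ 0) (x : R) :
    abelPoly n x = x * (x + n) ^ (n - 1) := by
  obtain ⟨m, rfl⟩ := Nat.exists_eq_succ_of_ne_zero hn
  rfl

theorem choose_succ_mul_abelPoly (j m : ℕ) :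
    ((j + m + 1).choose (j + 1) : R) * abelPoly m ((j + 1 : ℕ) : R) =
      (j + m).choose j * ((j + m + 1 : ℕ) : R) ^ m := by
  cases m with
  | zero => simp [abelPoly]
  | succ d =>
    have absorption : ((j + (d + 1) + 1).choose (j + 1) : R) * (j + 1 : ℕ) =
        (j + (d + 1) + 1 : ℕ) * ((j + (d + 1)).choose j : R) :=
      mod_cast congrArg (Nat.cast : ℕ → R) (Nat.add_one_mul_choose_eq (j + (d + 1)) j).symm
    have base : ((j + 1 : ℕ) + (d + 1 : ℕ) : R) = (j + (d + 1) + 1 : ℕ) := by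
      push_cast; ring
    rw [abelPoly, base, ← mul_assoc, absorption]
    ring

theorem sum_antidiagonal_choose_mul_abelPoly (n : ℕ) (x : R) :
    ∑ p ∈ antidiagonal n, (n.choose p.1 : R) * (x ^ p.1 * abelPoly p.2 (p.1 : R)) =
      abelPoly n x := by
  cases n with
  | zero => simp [abelPoly]
  | succ n =>
    have no_roots : abelPoly (n + 1) ((0 : ℕ) : R) = 0 := by simp [abelPoly]
    rw [Nat.sum_antidiagonal_succ, no_roots, mul_zero, mul_zero, zero_add, abelPoly,
      (Commute.all x _).add_pow', mul_sum]
    refine sum_congr rfl fun ⟨j, m⟩ hjm => ?_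
    obtain rfl : j + m = n := mem_antidiagonal.1 hjm
    calc ((j + m + 1).choose (j + 1) : R) * (x ^ (j + 1) * abelPoly m ((j + 1 : ℕ) : R))
        = x ^ (j + 1) * ((j + m + 1).choose (j + 1) * abelPoly m ((j + 1 : ℕ) : R)) := by ring
      _ = x * ((j + m).choose j • (x ^ j * ((j + m + 1 : ℕ) : R) ^ m)) := by
        rw [choose_succ_mul_abelPoly, nsmul_eq_mul]
        ring

theorem sum_set_pow_mul_abelPoly (V : Type*) [Fintype V] (x : R) :
    ∑ S : Set V, x ^ S.ncard * abelPoly Sᶜ.ncard (S.ncard : R) = abelPoly (Fintype.card V) x := by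
  classical
  calc ∑ S : Set V, x ^ S.ncard * abelPoly Sᶜ.ncard (S.ncard : R)
      = ∑ S : Finset V, x ^ #S * abelPoly (Fintype.card V - #S) (#S : R) := by
        refine (Fintype.sum_equiv Fintype.finsetEquivSet _ _ fun S => ?_).symm
        rw [Fintype.finsetEquivSet_apply, ← coe_compl, Set.ncard_coe_finset, Set.ncard_coe_finset,
          card_compl]
    _ = ∑ p ∈ antidiagonal (Fintype.card V),
          ((Fintype.card V).choose p.1 : R) * (x ^ p.1 * abelPoly p.2 (p.1 : R)) := by
        rw [← powerset_univ, sum_powerset_apply_card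
          (fun k => x ^ k * abelPoly (Fintype.card V - k) (k : R)), card_univ,
          Nat.sum_antidiagonal_eq_sum_range_succ_mk]
        simp only [nsmul_eq_mul]
    _ = abelPoly (Fintype.card V) x := sum_antidiagonal_choose_mul_abelPoly _ x

end AbelPolynomial

section FromRel

variable {V : Type*} {P : V → V → Prop}

theorem reflTransGen_of_reachable_fromRel (hP : Relator.RightUnique P) {v r : V}
    (hr : ∀ p, ¬ P r p) (h : (SimpleGraph.fromRel P).Reachable v r) : ReflTransGen P v r := by
  -- A vertex has at most one parent, so connected vertices have a common ancestor.
  have equiv : Equivalence (Join (ReflTransGen P)) :=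
    equivalence_join_reflTransGen fun a b c hab hac => ⟨b, .refl, hP hab hac ▸ .refl⟩
  have join : Join (ReflTransGen P) v r := by
    rw [SimpleGraph.reachable_iff_reflTransGen] at h
    refine reflTransGen_le_of_equivalence_of_le equiv (fun a b hab => ?_) v r h
    obtain ⟨-, hab | hba⟩ := (SimpleGraph.fromRel_adj P a b).1 hab
    · exact ⟨b, .single hab, .refl⟩
    · exact ⟨a, .refl, .single hba⟩
  obtain ⟨c, hvc, hrc⟩ := join
  rcases hrc.cases_head with rfl | ⟨p, hrp, -⟩
  · exact hvc
  · exact absurd hrp (hr p)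

theorem not_reachable_fromRel_deleteEdges (hP : Relator.RightUnique P) {v p : V}
    (hcycle : ¬ TransGen P v v) (hvp : P v p) :
    ¬ ((SimpleGraph.fromRel P).deleteEdges {s(v, p)}).Reachable v p := by
  intro h
  -- Once `P` is cut at `v`, a path from `p` to `v` must ascend, so `P v p` closes a cycle.
  let Q : V → V → Prop := fun a b => P a b ∧ a ≠ v
  have le_fromRel : (SimpleGraph.fromRel P).deleteEdges {s(v, p)} ≤ SimpleGraph.fromRel Q := by
    intro a b hab
    rw [SimpleGraph.deleteEdges_adj, SimpleGraph.fromRel_adj] at hab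
    obtain ⟨⟨hne, hab | hba⟩, hdel⟩ := hab
    · refine ⟨hne, .inl ⟨hab, ?_⟩⟩
      rintro rfl
      exact hdel (by rw [hP hab hvp]; rfl)
    · refine ⟨hne, .inr ⟨hba, ?_⟩⟩
      rintro rfl
      exact hdel (by rw [hP hba hvp, Sym2.eq_swap]; rfl)
  have hpv : ReflTransGen Q p v :=
    reflTransGen_of_reachable_fromRel (fun _ _ _ hab hac => hP hab.1 hac.1)
      (fun _ hv => hv.2 rfl) (h.symm.mono le_fromRel)
  exact hcycle (.head' hvp (ReflTransGen.mono (fun _ _ => And.left) _ _ hpv))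

theorem isAcyclic_fromRel (hP : Relator.RightUnique P) (hcycle : ∀ v, ¬ TransGen P v v) :
    (SimpleGraph.fromRel P).IsAcyclic := by
  rw [SimpleGraph.isAcyclic_iff_forall_adj_isBridge]
  intro v p hvp
  rw [SimpleGraph.isBridge_iff]
  obtain ⟨-, hvp | hpv⟩ := (SimpleGraph.fromRel_adj P v p).1 hvp
  · exact not_reachable_fromRel_deleteEdges hP (hcycle v) hvp
  · rw [Sym2.eq_swap]
    exact fun h => not_reachable_fromRel_deleteEdges hP (hcycle p) hpv h.symm

end FromRel

section RootedForest

variable {V : Type*} {G : SimpleGraph V} {R : Set V}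

/-- `G` is a forest and `R` marks exactly one vertex, the root, in each of its components. -/
def IsRootedForest (G : SimpleGraph V) (R : Set V) : Prop :=
  G.IsAcyclic ∧ ∀ c : G.ConnectedComponent, ∃! r, r ∈ R ∧ G.connectedComponentMk r = c

theorem isRootedForest_iff_reachable :
    IsRootedForest G R ↔ G.IsAcyclic ∧ (∀ v, ∃ r ∈ R, G.Reachable v r) ∧
      ∀ r ∈ R, ∀ s ∈ R, G.Reachable r s → r = s := by
  refine and_congr_right fun _ => ⟨fun h => ⟨fun v => ?_, fun r hr s hs hrs => ?_⟩,
    fun ⟨hex, huniq⟩ c => ?_⟩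
  · obtain ⟨r, ⟨hr, hrv⟩, -⟩ := h (G.connectedComponentMk v)
    exact ⟨r, hr, (SimpleGraph.ConnectedComponent.eq.1 hrv).symm⟩
  · exact (h (G.connectedComponentMk s)).unique ⟨hr, SimpleGraph.ConnectedComponent.eq.2 hrs⟩
      ⟨hs, rfl⟩
  · induction c using SimpleGraph.ConnectedComponent.ind with | _ v
    obtain ⟨r, hr, hvr⟩ := hex v
    refine ⟨r, ⟨hr, SimpleGraph.ConnectedComponent.eq.2 hvr.symm⟩, fun s ⟨hs, hsv⟩ => ?_⟩
    exact huniq s hs r hr ((SimpleGraph.ConnectedComponent.eq.1 hsv).trans hvr)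

theorem exists_adj_dist_lt {v r : V} (h : G.Reachable v r) (hne : v ≠ r) :
    ∃ w, G.Adj v w ∧ G.dist w r < G.dist v r := by
  obtain ⟨walk, hwalk⟩ := h.exists_walk_length_eq_dist
  have hnil : ¬ walk.Nil := SimpleGraph.Walk.not_nil_of_ne hne
  refine ⟨walk.snd, walk.adj_snd hnil, ?_⟩
  rw [← hwalk, ← SimpleGraph.Walk.length_tail_add_one hnil]
  exact Nat.lt_succ_of_le (SimpleGraph.dist_le _)

theorem IsRootedForest.exists_depth (h : IsRootedForest G R) :
    ∃ depth : V → ℕ, ∀ v ∉ R, ∃ w, G.Adj v w ∧ depth w < depth v := by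
  obtain ⟨-, hex, huniq⟩ := isRootedForest_iff_reachable.1 h
  choose root hroot hreach using hex
  refine ⟨fun v => G.dist v (root v), fun v hv => ?_⟩
  obtain ⟨w, hvw, hlt⟩ := exists_adj_dist_lt (hreach v) fun heq => hv (heq ▸ hroot v)
  have hrw : root v = root w := huniq _ (hroot v) _ (hroot w)
    ((hreach v).symm.trans (hvw.reachable.trans (hreach w)))
  exact ⟨w, hvw, by simpa only [← hrw] using hlt⟩

theorem IsRootedForest.eq_of_le {F : SimpleGraph V} (hF : IsRootedForest F R)
    (hG : IsRootedForest G R) (hle : F ≤ G) : F = G := by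
  obtain ⟨-, hex, -⟩ := isRootedForest_iff_reachable.1 hF
  obtain ⟨-, -, huniq⟩ := isRootedForest_iff_reachable.1 hG
  have reachable_eq : F.Reachable = G.Reachable := by
    ext v w
    refine ⟨fun h => h.mono hle, fun h => ?_⟩
    obtain ⟨r, hr, hvr⟩ := hex v
    obtain ⟨s, hs, hws⟩ := hex w
    have hrs : r = s := huniq r hr s hs
      ((hvr.mono hle).symm.trans (h.trans (hws.mono hle)))
    exact hvr.trans (hrs ▸ hws.symm)
  exact ((SimpleGraph.maximal_isAcyclic_iff_reachable_eq hle hF.1).2 reachable_eq).eq_of_le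
    ⟨le_rfl, hG.1⟩ hle

end RootedForest

/-- A forest on `V` given by parents: `f v = .inr p` says that `p` is the parent of `v`, and
`f v = .inl x` that `v` is a root labelled by `x`. Well-foundedness rules out cycles, and infinite
ascending paths when `V` is infinite. -/
abbrev ParentMap (V X : Type*) := {f : V → X ⊕ V // WellFounded fun p v => f v = .inr p}

namespace ParentMap

section Graph

variable {V X : Type*} (f : ParentMap V X)

noncomputable instance [Finite V] [Finite X] : Fintype (ParentMap V X) := Fintype.ofFinite _

instance [IsEmpty V] : Unique (ParentMap V X) where
  default := ⟨isEmptyElim, ⟨isEmptyElim⟩⟩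
  uniq _ := Subtype.ext (Subsingleton.elim _ _)

/-- The vertices without a parent. -/
def roots : Set V := {v | (f.1 v).isLeft}

/-- The underlying graph, with an edge between each vertex and its parent. -/
def graph : SimpleGraph V := SimpleGraph.fromRel fun v p => f.1 v = .inr p

variable {f}

theorem mem_roots_iff_forall_ne {v : V} : v ∈ f.roots ↔ ∀ p, f.1 v ≠ .inr p := by
  cases h : f.1 v <;> simp [roots, h]

theorem rightUnique_parent : Relator.RightUnique fun v p => f.1 v = .inr p :=
  fun _ _ _ hb hc => Sum.inr_injective (hb.symm.trans hc)

theorem not_transGen_parent (v : V) : ¬ TransGen (fun v p => f.1 v = .inr p) v v :=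
  fun h => f.2.transGen.irrefl.irrefl v (transGen_swap.1 h)

theorem graph_adj {v w : V} : f.graph.Adj v w ↔ f.1 v = .inr w ∨ f.1 w = .inr v := by
  refine (SimpleGraph.fromRel_adj _ v w).trans (and_iff_right_of_imp ?_)
  rintro h rfl
  exact not_transGen_parent v (.single (or_self_iff.1 h))

theorem exists_mem_roots_reachable (v : V) : ∃ r ∈ f.roots, f.graph.Reachable v r := by
  induction v using f.2.induction with | _ v ih
  by_cases hv : v ∈ f.roots
  · exact ⟨v, hv, .refl v⟩
  · obtain ⟨p, hp⟩ : ∃ p, f.1 v = .inr p := by simpa [mem_roots_iff_forall_ne] using hv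
    obtain ⟨r, hr, hpr⟩ := ih p hp
    exact ⟨r, hr, (graph_adj.2 (.inl hp)).reachable.trans hpr⟩

instance [Nonempty V] [IsEmpty X] : IsEmpty (ParentMap V X) := by
  refine ⟨fun f => ?_⟩
  obtain ⟨r, hr, -⟩ := exists_mem_roots_reachable (f := f) (Classical.arbitrary V)
  obtain ⟨x, -⟩ := Sum.isLeft_iff.1 hr
  exact isEmptyElim x

theorem isRootedForest (f : ParentMap V X) : IsRootedForest f.graph f.roots := by
  refine isRootedForest_iff_reachable.2 ⟨isAcyclic_fromRel rightUnique_parent not_transGen_parent,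
    exists_mem_roots_reachable, fun r hr s hs hrs => ?_⟩
  have ascent := reflTransGen_of_reachable_fromRel rightUnique_parent
    (mem_roots_iff_forall_ne.1 hs) hrs
  rcases ascent.cases_head with rfl | ⟨p, hrp, -⟩
  · rfl
  · exact absurd hrp (mem_roots_iff_forall_ne.1 hr p)

theorem eq_of_graph_eq_of_roots_eq [Subsingleton X] {f g : ParentMap V X}
    (hgraph : f.graph = g.graph) (hroots : f.roots = g.roots) : f = g := by
  refine Subtype.ext (funext fun v => ?_)
  induction v using f.2.induction with | _ v ih
  cases hv : f.1 v with
  | inl x =>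
    have hgv : v ∈ g.roots := hroots ▸ (by simp [roots, hv] : v ∈ f.roots)
    obtain ⟨y, hy⟩ := Sum.isLeft_iff.1 hgv
    rw [hy, Subsingleton.elim x y]
  | inr p =>
    have hadj : g.graph.Adj v p := hgraph ▸ graph_adj.2 (.inl hv)
    rcases graph_adj.1 hadj with hvp | hpv
    · exact hvp.symm
    · exact absurd ((ih p hv).trans hpv) (f.2.asymmetric _ _ hv)

theorem exists_roots_eq_graph_le [Nonempty X] {G : SimpleGraph V} {R : Set V}
    (h : IsRootedForest G R) : ∃ f : ParentMap V X, f.roots = R ∧ f.graph ≤ G := by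
  classical
  obtain ⟨depth, hdepth⟩ := h.exists_depth
  choose parent hadj hlt using hdepth
  let toFun (v : V) : X ⊕ V :=
    if hv : v ∈ R then .inl (Classical.arbitrary X) else .inr (parent v hv)
  have toFun_eq_inr {v p : V} (hvp : toFun v = .inr p) : ∃ hv : v ∉ R, parent v hv = p := by
    by_cases hv : v ∈ R <;> simp_all [toFun]
  have wf : WellFounded fun p v => toFun v = .inr p := by
    refine Subrelation.wf ?_ (measure depth).wf
    intro p v hvp
    obtain ⟨hv, rfl⟩ := toFun_eq_inr hvp
    exact hlt v hv
  refine ⟨⟨toFun, wf⟩, ?_, fun v w hvw => ?_⟩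
  · ext v
    by_cases hv : v ∈ R <;> simp [roots, toFun, hv]
  · rcases graph_adj.1 hvw with hvw | hwv
    · obtain ⟨hv, rfl⟩ := toFun_eq_inr hvw
      exact hadj v hv
    · obtain ⟨hw, rfl⟩ := toFun_eq_inr hwv
      exact (hadj w hw).symm

/-- Parent maps with a single root label are the same as rooted forests. -/
noncomputable def equivRootedForest (V X : Type*) [Unique X] :
    ParentMap V X ≃ {p : SimpleGraph V × Set V // IsRootedForest p.1 p.2} :=
  Equiv.ofBijective (fun f => ⟨(f.graph, f.roots), f.isRootedForest⟩) <| by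
    refine ⟨fun f g hfg => ?_, fun ⟨⟨G, R⟩, hGR⟩ => ?_⟩
    · obtain ⟨hgraph, hroots⟩ := Prod.ext_iff.1 (Subtype.ext_iff.1 hfg)
      exact eq_of_graph_eq_of_roots_eq hgraph hroots
    · obtain ⟨f, rfl, hle⟩ := exists_roots_eq_graph_le (X := X) hGR
      exact ⟨f, Subtype.ext (Prod.ext (f.isRootedForest.eq_of_le hGR hle) rfl)⟩

end Graph

section DeleteRoots

variable {V X : Type*} (S : Set V) [DecidablePred (· ∈ S)]

/-- The parent function obtained by hanging the forest `g` on `Sᶜ`, whose roots are labelled by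
elements of `S`, below the elements of `S`, which become roots labelled by `h`. -/
def attach (h : S → X) (g : ↥Sᶜ → S ⊕ ↥Sᶜ) (v : V) : X ⊕ V :=
  if hv : v ∈ S then .inl (h ⟨v, hv⟩) else .inr (Equiv.Set.sumCompl S (g ⟨v, hv⟩))

variable {S} {h : S → X} {g : ↥Sᶜ → S ⊕ ↥Sᶜ}

theorem attach_coe (s : S) : attach S h g s = .inl (h s) := by
  simp [attach]

theorem attach_coe_compl (v : ↥Sᶜ) : attach S h g v = .inr (Equiv.Set.sumCompl S (g v)) :=
  dif_neg v.2

theorem isLeft_attach (v : V) : (attach S h g v).isLeft ↔ v ∈ S := by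
  by_cases hv : v ∈ S <;> simp [attach, hv]

theorem wellFounded_attach_iff :
    (WellFounded fun p v => attach S h g v = .inr p) ↔ WellFounded fun p v => g v = .inr p := by
  refine ⟨fun H => ?_, fun H => ⟨fun v => ?_⟩⟩
  · refine Subrelation.wf (fun {p v} hvp => ?_) (InvImage.wf Subtype.val H)
    simp [InvImage, attach_coe_compl, hvp]
  · have acc_coe (s : S) : Acc (fun p v => attach S h g v = .inr p) s :=
      ⟨_, fun p hp => by simp [attach_coe] at hp⟩
    have acc_coe_compl (w : ↥Sᶜ) : Acc (fun p v => attach S h g v = .inr p) w := by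
      induction w using H.induction with | _ w ih
      refine ⟨_, fun p hp => ?_⟩
      rw [attach_coe_compl, Sum.inr.injEq] at hp
      subst hp
      rcases hw : g w with s | p
      · exact acc_coe s
      · exact ih p hw
    by_cases hv : v ∈ S
    · exact acc_coe ⟨v, hv⟩
    · exact acc_coe_compl ⟨v, hv⟩

theorem attach_inj {h' : S → X} {g' : ↥Sᶜ → S ⊕ ↥Sᶜ} :
    attach S h g = attach S h' g' ↔ h = h' ∧ g = g' := by
  refine ⟨fun heq => ⟨funext fun s => ?_, funext fun v => ?_⟩, fun ⟨hh, hg⟩ => hh ▸ hg ▸ rfl⟩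
  · simpa only [attach_coe, Sum.inl.injEq] using congrFun heq s
  · simpa only [attach_coe_compl, Sum.inr.injEq, EmbeddingLike.apply_eq_iff_eq] using congrFun heq v

theorem exists_attach_eq {f : V → X ⊕ V} (hf : ∀ v, (f v).isLeft ↔ v ∈ S) :
    ∃ h g, attach S h g = f := by
  have isRight (v : ↥Sᶜ) : (f v).isRight := by
    rw [← Sum.not_isLeft, hf]
    exact v.2
  refine ⟨fun s => (f s).getLeft ((hf s).2 s.2),
    fun v => (Equiv.Set.sumCompl S).symm ((f v).getRight (isRight v)), funext fun v => ?_⟩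
  by_cases hv : v ∈ S <;> simp [attach, hv]

end DeleteRoots

open Classical in
/-- Deleting the roots: a parent map amounts to its set `S` of roots, their labels, and a parent
map on `Sᶜ` whose roots are labelled by their former parents in `S`. -/
noncomputable def sigmaRootsEquiv (V X : Type*) :
    (Σ S : Set V, (S → X) × ParentMap ↥Sᶜ S) ≃ ParentMap V X :=
  Equiv.ofBijective
    (fun t => ⟨attach t.1 t.2.1 t.2.2.1, wellFounded_attach_iff.2 t.2.2.2⟩) <| by
    refine ⟨fun ⟨S, h, g, hg⟩ ⟨S', h', g', hg'⟩ heq => ?_, fun ⟨f, hf⟩ => ?_⟩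
    · replace heq : attach S h g = attach S' h' g' := Subtype.ext_iff.1 heq
      obtain rfl : S = S' := Set.ext fun v => by
        rw [← isLeft_attach (h := h) (g := g), heq, isLeft_attach]
      obtain ⟨rfl, rfl⟩ := attach_inj.1 heq
      rfl
    · obtain ⟨S, hS⟩ : ∃ S : Set V, ∀ v, (f v).isLeft ↔ v ∈ S :=
        ⟨{v | (f v).isLeft}, fun _ => .rfl⟩
      obtain ⟨h, g, rfl⟩ := exists_attach_eq hS
      exact ⟨⟨S, h, g, wellFounded_attach_iff.1 hf⟩, rfl⟩

theorem roots_sigmaRootsEquiv {V X : Type*} (t : Σ S : Set V, (S → X) × ParentMap ↥Sᶜ S) :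
    (sigmaRootsEquiv V X t).roots = t.1 := by
  classical exact Set.ext isLeft_attach

section Count

variable {R : Type*} [CommSemiring R]

theorem sum_pow_ncard_roots_eq_sum_set (V X : Type*) [Fintype V] [Fintype X] (x : R) :
    ∑ f : ParentMap V X, x ^ f.roots.ncard =
      ∑ S : Set V, (Fintype.card X * x) ^ S.ncard * Fintype.card (ParentMap ↥Sᶜ S) := by
  classical
  rw [← (sigmaRootsEquiv V X).sum_comp, Fintype.sum_sigma]
  refine sum_congr rfl fun S _ => ?_
  simp only [roots_sigmaRootsEquiv, sum_const, card_univ, Fintype.card_prod, Fintype.card_fun,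
    nsmul_eq_mul, Nat.cast_mul, Nat.cast_pow, mul_pow, ← Nat.card_coe_set_eq,
    Nat.card_eq_fintype_card]
  ring

theorem sum_pow_ncard_roots (V X : Type u) [Fintype V] [Fintype X] (x : R) :
    ∑ f : ParentMap V X, x ^ f.roots.ncard = abelPoly (Fintype.card V) (Fintype.card X * x) := by
  induction hn : Fintype.card V using Nat.strong_induction_on generalizing V X x with | _ n ih
  subst hn
  cases isEmpty_or_nonempty V
  · simp [abelPoly, Set.eq_empty_of_isEmpty]
  have card_eq (S : Set V) :
      (Fintype.card (ParentMap ↥Sᶜ S) : R) = abelPoly Sᶜ.ncard (S.ncard : R) := by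
    rcases S.eq_empty_or_nonempty with rfl | hS
    · have : Nonempty ↥(∅ᶜ : Set V) := by simp
      rw [Fintype.card_eq_zero, abelPoly_of_ne_zero (by simp)]
      simp
    · have hlt : Sᶜ.ncard < Fintype.card V := by
        rw [← Nat.card_eq_fintype_card]
        exact Set.ncard_lt_card (by simpa using hS.ne_empty)
      classical
      simpa [← Nat.card_coe_set_eq] using
        ih _ hlt ↥Sᶜ S 1 (by rw [← Nat.card_eq_fintype_card, Nat.card_coe_set_eq])
  simp only [sum_pow_ncard_roots_eq_sum_set, card_eq, sum_set_pow_mul_abelPoly]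

end Count

end ParentMap

open Classical in
theorem stmt_4_general {V R : Type*} [Fintype V] [Nonempty V] [CommSemiring R] (x : R) :
    ∑ p : {p : SimpleGraph V × Set V // IsRootedForest p.1 p.2}, x ^ p.1.2.ncard =
      x * (x + Fintype.card V) ^ (Fintype.card V - 1) := by
  rw [← (ParentMap.equivRootedForest V PUnit).sum_comp]
  refine (ParentMap.sum_pow_ncard_roots V PUnit x).trans ?_
  rw [abelPoly_of_ne_zero Fintype.card_ne_zero, Fintype.card_punit, Nat.cast_one, one_mul]

theorem stmt_4 (n : ℕ) (hn : 1 ≤ n) :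
    Nat.card {p : SimpleGraph (Fin n) × Set (Fin n) //
        p.1.IsAcyclic ∧
        (∀ c : p.1.ConnectedComponent, ∃! r, r ∈ p.2 ∧ p.1.connectedComponentMk r = c)}
      = (n + 1) ^ (n - 1) := by
  have : Nonempty (Fin n) := Fin.pos_iff_nonempty.1 hn
  have card_forests := stmt_4_general (V := Fin n) (1 : ℕ)
  simp only [one_pow, sum_const, card_univ, smul_eq_mul, mul_one, one_mul, Fintype.card_fin,
    Nat.cast_id] at card_forests
  rw [Fintype.card_eq_nat_card, add_comm] at card_forests
  exact card_forests
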